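/- There is a universal constant C > 0 with the following property. Let 𝒢 = (G_1, …, G_ℓ) be a connected temporal graph with orbit number r = |𝒢/Aut(𝒢)|, let S be an orbit of Aut(𝒢) with |S| ≥ 2, and let c be a real number with 1 < c < |S|. Set f(c) = 1 + (c−1)/c and φ(c) = 1/log₂ f(c). For any u ∈ S and any time step t with t + C·r·c·(|S|/c)^{φ(c)}·log |S| ≤ ℓ, there exists a temporal walk W starting at u at time step t that visits at least |S|/c vertices of S and spans at most C·r·c·(|S|/c)^{φ(c)}·log |S| time steps. -/

import Mathlib

/-!
The walk is built by repeated doubling. Let `Γ = Aut(𝒢)` and `n = |S|`.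

*Reaching.* For a set `R` of vertices let `μ_R(v)` be the number of `σ ∈ Γ` with `σ v ∈ R`; it is
constant on orbits, and `μ_R(v) · n = |R ∩ S| · |Γ|` for `v ∈ S`. If `R'` arises from `R` by one
time step, then `μ_R(a) ≤ μ_{R'}(b)` for every edge `ab` of the snapshot. As the snapshots are
connected and there are `r` orbits, every value of `μ` spreads to all vertices within `r` steps
(`spread`). In `r` steps all values become at least the value on `S`, one further step makes some
value strictly larger because the snapshot is connected, and `r` more steps carry that larger value
back to `S`. So every `2r + 1` steps the reached part of `S` grows (`reach_grow`), and any
`k ≤ n` vertices of `S` are reached in `(2r + 1) k` steps (`reach_card`).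

*Doubling.* Suppose that from every vertex of `S`, at every time, `K ≤ n / c` vertices of `S` can be
visited in `T` steps. Visit a set `X` of `K` vertices, then let `R` be the set reached in a further
`(2r + 1)⌈cK⌉` steps, and consider a walk from a fixed `u₀ ∈ S` visiting `Y`, `|Y| = K`. Averaging
over the `σ ∈ Γ` with `σ u₀ ∈ R`, some `σ Y` meets `X` in at most `K / c` vertices
(`exists_small_overlap`). Walking on to `σ u₀` and following the `σ`-image of the second walk visits
`f(c) K` vertices in `2T + (2r + 1)⌈cK⌉` steps (`doubling`).

*Recurrence.* Since `(f K)^φ = 2 K^φ`, the bound `T ≤ 6 r c K^φ (1 + log₂ K)` is preserved by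
doubling (`potential_step`). One last doubling from the largest `K < n / c` that satisfies this bound
gives the theorem with `C = 30`.
-/

open scoped BigOperators

/-- A temporal graph on a finite vertex set `V`: a lifetime `ℓ` together with a
snapshot graph `snap t` for every time step `t` (only `t ∈ [1, ℓ]` is relevant). -/
structure TemporalGraph (V : Type) [Fintype V] where
  lifetime : ℕ
  snap : ℕ → SimpleGraph V

namespace TemporalGraph

variable {V : Type} [Fintype V]

/-- A temporal graph is connected if every snapshot within its lifetime is connected. -/
def IsConnectedTG (𝒢 : TemporalGraph V) : Prop :=
  ∀ t, 1 ≤ t → t ≤ 𝒢.lifetime → (𝒢.snap t).Connected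

/-- `W` is a temporal walk starting at time step `t` and ending at time step `t'`:
at each time step `s` with `t ≤ s < t'` it either waits or traverses an edge of
the snapshot `G_s`. -/
def IsWalk (𝒢 : TemporalGraph V) (W : ℕ → V) (t t' : ℕ) : Prop :=
  1 ≤ t ∧ t ≤ t' ∧ t' ≤ 𝒢.lifetime ∧
    ∀ s, t ≤ s → s < t' → W (s + 1) = W s ∨ (𝒢.snap s).Adj (W s) (W (s + 1))

/-- The set of vertices visited by `W` between time steps `t` and `t'`. -/
def visited (W : ℕ → V) (t t' : ℕ) : Set V := W '' Set.Icc t t'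

/-- `σ` is an automorphism of the temporal graph `𝒢`, i.e. an automorphism of
every snapshot within the lifetime. -/
def IsAut (𝒢 : TemporalGraph V) (σ : Equiv.Perm V) : Prop :=
  ∀ t, 1 ≤ t → t ≤ 𝒢.lifetime →
    ∀ u v : V, (𝒢.snap t).Adj u v ↔ (𝒢.snap t).Adj (σ u) (σ v)

/-- The orbit of a vertex `u` under `Aut(𝒢)`. -/
def orbit (𝒢 : TemporalGraph V) (u : V) : Set V :=
  {v | ∃ σ : Equiv.Perm V, 𝒢.IsAut σ ∧ σ u = v}

/-- `S` is an orbit of `Aut(𝒢)`. -/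
def IsOrbit (𝒢 : TemporalGraph V) (S : Set V) : Prop :=
  ∃ u : V, S = 𝒢.orbit u

/-- The orbit number of `𝒢`: the number of orbits of `Aut(𝒢)` on `V`. -/
noncomputable def orbitNumber (𝒢 : TemporalGraph V) : ℕ :=
  (Set.range 𝒢.orbit).ncard

/-- Vertices reachable from `u` by a temporal walk starting at time step `t`
and ending at a time step at most `t'`. -/
def reachSet (𝒢 : TemporalGraph V) (u : V) (t t' : ℕ) : Set V :=
  {v | ∃ t'' ≤ t', ∃ W : ℕ → V, 𝒢.IsWalk W t t'' ∧ W t = u ∧ W t'' = v}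

/-- `W` is a temporal walk that only traverses orbit boundary edges
(edges between two different orbits); waiting is allowed. -/
def IsBoundaryWalk (𝒢 : TemporalGraph V) (W : ℕ → V) (t t' : ℕ) : Prop :=
  1 ≤ t ∧ t ≤ t' ∧ t' ≤ 𝒢.lifetime ∧
    ∀ s, t ≤ s → s < t' → W (s + 1) = W s ∨
      ((𝒢.snap s).Adj (W s) (W (s + 1)) ∧ 𝒢.orbit (W s) ≠ 𝒢.orbit (W (s + 1)))

/-- The lane `L_{t,t'}(X)`: all vertices reachable from some vertex of `X` by a
temporal walk starting at time step `t`, ending at a time step at most `t'`,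
that only uses orbit boundary edges. -/
def lane (𝒢 : TemporalGraph V) (X : Set V) (t t' : ℕ) : Set V :=
  {v | ∃ u ∈ X, ∃ t'' ≤ t', ∃ W : ℕ → V, 𝒢.IsBoundaryWalk W t t'' ∧ W t = u ∧ W t'' = v}

end TemporalGraph

namespace TemporalGraph

open scoped Classical

variable {V : Type} [Fintype V]

/-! ### Automorphisms and counting -/

/-- The automorphism group `Aut(𝒢)`, as a finite set of permutations. -/
noncomputable def auts (𝒢 : TemporalGraph V) : Finset (Equiv.Perm V) :=
  Finset.univ.filter fun σ => 𝒢.IsAut σ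

/-- The number of automorphisms that map `v` into `R`. Divided by `|Aut(𝒢)|` this is the fraction
of the orbit of `v` that lies in `R`. -/
noncomputable def mu (𝒢 : TemporalGraph V) (R : Set V) (v : V) : ℕ :=
  (𝒢.auts.filter fun σ => σ v ∈ R).card

lemma mem_auts {𝒢 : TemporalGraph V} {σ : Equiv.Perm V} : σ ∈ 𝒢.auts ↔ 𝒢.IsAut σ := by
  simp [auts]

lemma isAut_one (𝒢 : TemporalGraph V) : 𝒢.IsAut 1 := fun _ _ _ _ _ => Iff.rfl

lemma IsAut.mul {𝒢 : TemporalGraph V} {σ τ : Equiv.Perm V} (hσ : 𝒢.IsAut σ) (hτ : 𝒢.IsAut τ) :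
    𝒢.IsAut (σ * τ) := fun t h1 h2 u v =>
  (hτ t h1 h2 u v).trans (hσ t h1 h2 (τ u) (τ v))

lemma IsAut.inv {𝒢 : TemporalGraph V} {σ : Equiv.Perm V} (hσ : 𝒢.IsAut σ) :
    𝒢.IsAut σ⁻¹ := fun t h1 h2 u v => by
  have := hσ t h1 h2 (σ⁻¹ u) (σ⁻¹ v)
  simpa using this.symm

lemma mem_orbit_self (𝒢 : TemporalGraph V) (u : V) : u ∈ 𝒢.orbit u := ⟨1, isAut_one 𝒢, rfl⟩

lemma IsOrbit.map_mem {𝒢 : TemporalGraph V} {S : Set V} (hS : 𝒢.IsOrbit S) {σ : Equiv.Perm V}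
    (hσ : 𝒢.IsAut σ) {x : V} (hx : x ∈ S) : σ x ∈ S := by
  obtain ⟨u, rfl⟩ := hS
  obtain ⟨τ, hτ, rfl⟩ := hx
  exact ⟨σ * τ, hσ.mul hτ, rfl⟩

lemma IsOrbit.exists_aut {𝒢 : TemporalGraph V} {S : Set V} (hS : 𝒢.IsOrbit S) {x y : V}
    (hx : x ∈ S) (hy : y ∈ S) : ∃ σ, 𝒢.IsAut σ ∧ σ x = y := by
  obtain ⟨u, rfl⟩ := hS
  obtain ⟨τ, hτ, rfl⟩ := hx
  obtain ⟨ρ, hρ, rfl⟩ := hy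
  exact ⟨ρ * τ⁻¹, hρ.mul hτ.inv, by simp⟩

lemma mu_mono (𝒢 : TemporalGraph V) {R R' : Set V} (h : R ⊆ R') (v : V) :
    𝒢.mu R v ≤ 𝒢.mu R' v :=
  Finset.card_le_card fun σ hσ => by
    simp only [Finset.mem_filter] at hσ ⊢
    exact ⟨hσ.1, h hσ.2⟩

lemma mu_map (𝒢 : TemporalGraph V) (R : Set V) {τ : Equiv.Perm V} (hτ : 𝒢.IsAut τ) (v : V) :
    𝒢.mu R (τ v) = 𝒢.mu R v := by
  refine Finset.card_bij' (fun σ _ => σ * τ) (fun σ _ => σ * τ⁻¹) ?_ ?_ ?_ ?_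
  · intro σ hσ
    simp only [Finset.mem_filter, mem_auts] at hσ ⊢
    exact ⟨hσ.1.mul hτ, by simpa using hσ.2⟩
  · intro σ hσ
    simp only [Finset.mem_filter, mem_auts] at hσ ⊢
    exact ⟨hσ.1.mul hτ.inv, by simpa using hσ.2⟩
  · intro σ _; simp
  · intro σ _; simp

/-- All fibres of `σ ↦ σ y` over the orbit of `y` have the same size `|Γ| / |S|`. -/
lemma mu_singleton_mul (𝒢 : TemporalGraph V) {S : Set V} (hS : 𝒢.IsOrbit S) {y x : V}
    (hy : y ∈ S) (hx : x ∈ S) : 𝒢.mu {x} y * S.ncard = 𝒢.auts.card := by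
  have key : ∀ z ∈ S.toFinset, (𝒢.auts.filter fun σ => σ y = z).card = 𝒢.mu {x} y := by
    intro z hz
    obtain ⟨τ, hτ, hτz⟩ := hS.exists_aut (by simpa using hz) hx
    refine Finset.card_bij' (fun σ _ => τ * σ) (fun σ _ => τ⁻¹ * σ) ?_ ?_ ?_ ?_
    · intro σ hσ
      simp only [Finset.mem_filter, mem_auts, Set.mem_singleton_iff] at hσ ⊢
      exact ⟨hτ.mul hσ.1, by simp [hσ.2, hτz]⟩
    · intro σ hσ
      simp only [Finset.mem_filter, mem_auts, Set.mem_singleton_iff] at hσ ⊢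
      exact ⟨hτ.inv.mul hσ.1, by simp [hσ.2, ← hτz]⟩
    · intro σ _; simp
    · intro σ _; simp
  have h := Finset.card_eq_sum_card_fiberwise (s := 𝒢.auts) (t := S.toFinset) (f := fun σ => σ y)
    (fun σ hσ => by
      simpa using hS.map_mem (mem_auts.1 (by simpa using hσ)) hy)
  rw [h, Finset.sum_congr rfl key, Finset.sum_const, smul_eq_mul, mul_comm,
    Set.ncard_eq_toFinset_card']

lemma mu_mul (𝒢 : TemporalGraph V) {S : Set V} (hS : 𝒢.IsOrbit S) {y : V} (hy : y ∈ S)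
    (R : Set V) : 𝒢.mu R y * S.ncard = (R ∩ S).ncard * 𝒢.auts.card := by
  have h := Finset.card_eq_sum_card_fiberwise (s := 𝒢.auts.filter fun σ => σ y ∈ R)
    (t := (R ∩ S).toFinset) (f := fun σ => σ y)
    (fun σ hσ => by
      simp only [Finset.coe_filter, Set.mem_ofPred_eq, mem_auts] at hσ
      simpa using ⟨hσ.2, hS.map_mem hσ.1 hy⟩)
  have h2 : ∀ x ∈ (R ∩ S).toFinset,
      ((𝒢.auts.filter fun σ => σ y ∈ R).filter fun σ => σ y = x).card * S.ncard
        = 𝒢.auts.card := by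
    intro x hx
    have hx' : x ∈ R ∩ S := by simpa using hx
    rw [← mu_singleton_mul 𝒢 hS hy hx'.2, mu, Finset.filter_filter]
    congr 2
    ext σ
    simp only [Finset.mem_filter, Set.mem_singleton_iff]
    constructor
    · rintro ⟨h1, _, h3⟩; exact ⟨h1, h3⟩
    · rintro ⟨h1, h3⟩; exact ⟨h1, h3 ▸ hx'.1, h3⟩
  rw [mu, h, Finset.sum_mul, Finset.sum_congr rfl h2, Finset.sum_const, smul_eq_mul,
    Set.ncard_eq_toFinset_card']

/-! ### Reached sets -/

/-- The set of vertices reached from `w` at time `t` after `i` time steps (waiting allowed). -/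
def reach (𝒢 : TemporalGraph V) (w : V) (t : ℕ) : ℕ → Set V
  | 0 => {w}
  | i + 1 => {b | b ∈ reach 𝒢 w t i ∨ ∃ a ∈ reach 𝒢 w t i, (𝒢.snap (t + i)).Adj a b}

lemma reach_succ_subset (𝒢 : TemporalGraph V) (w : V) (t i : ℕ) :
    𝒢.reach w t i ⊆ 𝒢.reach w t (i + 1) := fun _ hx => Or.inl hx

lemma reach_mono (𝒢 : TemporalGraph V) (w : V) (t : ℕ) : Monotone (𝒢.reach w t) :=
  monotone_nat_of_le_succ (reach_succ_subset 𝒢 w t)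

lemma mem_reach_self (𝒢 : TemporalGraph V) (w : V) (t i : ℕ) : w ∈ 𝒢.reach w t i :=
  reach_mono 𝒢 w t (Nat.zero_le i) rfl

lemma exists_walk_of_mem_reach (𝒢 : TemporalGraph V) {w : V} {t : ℕ} (ht : 1 ≤ t) :
    ∀ i, t + i ≤ 𝒢.lifetime → ∀ v ∈ 𝒢.reach w t i,
      ∃ W : ℕ → V, 𝒢.IsWalk W t (t + i) ∧ W t = w ∧ W (t + i) = v := by
  intro i
  induction i with
  | zero =>
    intro hi v hv
    obtain rfl : v = w := hv
    exact ⟨fun _ => v, ⟨ht, le_rfl, hi, fun s h1 h2 => Or.inl rfl⟩, rfl, rfl⟩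
  | succ i ih =>
    intro hi v hv
    have : ∃ a ∈ 𝒢.reach w t i, v = a ∨ (𝒢.snap (t + i)).Adj a v := by
      rcases hv with hv | ⟨a, ha, hav⟩
      · exact ⟨v, hv, Or.inl rfl⟩
      · exact ⟨a, ha, Or.inr hav⟩
    obtain ⟨a, ha, hav⟩ := this
    obtain ⟨W, hW, hWt, hWi⟩ := ih (by omega) a ha
    refine ⟨fun s => if s ≤ t + i then W s else v, ⟨ht, by omega, hi, ?_⟩, ?_, ?_⟩
    · intro s h1 h2
      rcases Nat.lt_or_ge s (t + i) with h | h
      · simpa [h.le, Nat.succ_le_of_lt h] using hW.2.2.2 s h1 h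
      · obtain rfl : s = t + i := by omega
        simpa [hWi] using hav
    · simp [hWt]
    · simp [← add_assoc]

lemma exists_cut_edge {V : Type} {G : SimpleGraph V} (hG : G.Connected) {Z : Set V} {a b : V} (ha : a ∈ Z)
    (hb : b ∉ Z) : ∃ x ∈ Z, ∃ y ∉ Z, G.Adj x y := by
  obtain ⟨p⟩ := hG.preconnected a b
  obtain ⟨d, _, h1, h2⟩ := p.exists_boundary_dart Z ha hb
  exact ⟨d.fst, h1, d.snd, h2, d.adj⟩

lemma mu_adj (𝒢 : TemporalGraph V) {w : V} {t i : ℕ} (ht : 1 ≤ t) (hi : t + i ≤ 𝒢.lifetime)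
    {a b : V} (hab : (𝒢.snap (t + i)).Adj a b) :
    𝒢.mu (𝒢.reach w t i) a ≤ 𝒢.mu (𝒢.reach w t (i + 1)) b :=
  Finset.card_le_card fun σ hσ => by
    simp only [Finset.mem_filter, mem_auts] at hσ ⊢
    exact ⟨hσ.1, Or.inr ⟨σ a, hσ.2, (hσ.1 (t + i) (by omega) hi a b).1 hab⟩⟩

/-- A lower bound on `mu` at one vertex holds at all vertices `r` time steps later: the set where it
holds is a union of orbits and gains at least one orbit per step. -/
lemma spread (𝒢 : TemporalGraph V) (hc : 𝒢.IsConnectedTG) {w : V} {t i : ℕ} (ht : 1 ≤ t)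
    (hi : t + (i + 𝒢.orbitNumber) ≤ 𝒢.lifetime) {M : ℕ} {a : V}
    (ha : M ≤ 𝒢.mu (𝒢.reach w t i) a) (v : V) :
    M ≤ 𝒢.mu (𝒢.reach w t (i + 𝒢.orbitNumber)) v := by
  set Z : ℕ → Set V := fun j => {x | M ≤ 𝒢.mu (𝒢.reach w t (i + j)) x} with hZ
  have hmono : ∀ j, Z j ⊆ Z (j + 1) := fun j x hx =>
    le_trans hx (mu_mono 𝒢 (reach_succ_subset 𝒢 w t (i + j)) x)
  have haZ : ∀ j, a ∈ Z j := fun j => le_trans ha (mu_mono 𝒢 (reach_mono 𝒢 w t (by omega)) a)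
  have key : ∀ j, j ≤ 𝒢.orbitNumber → Z j = Set.univ ∨ j + 1 ≤ (𝒢.orbit '' Z j).ncard := by
    intro j
    induction j with
    | zero =>
      intro _
      right
      exact (Set.ncard_pos (Set.toFinite _)).2 ⟨_, a, haZ 0, rfl⟩
    | succ j ih =>
      intro hj
      rcases ih (by omega) with h | h
      · left
        exact Set.eq_univ_of_univ_subset (h ▸ hmono j)
      · by_cases hu : Z j = Set.univ
        · left
          exact Set.eq_univ_of_univ_subset (hu ▸ hmono j)
        right
        obtain ⟨b, hb⟩ := (Set.ne_univ_iff_exists_notMem _).1 hu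
        obtain ⟨x, hx, y, hy, hxy⟩ :=
          exists_cut_edge (hc (t + (i + j)) (by omega) (by omega)) (haZ j) hb
        have hy' : y ∈ Z (j + 1) := le_trans hx (mu_adj 𝒢 ht (by omega) hxy)
        have : 𝒢.orbit '' Z j ⊂ 𝒢.orbit '' Z (j + 1) := by
          refine (Set.ssubset_iff_of_subset (Set.image_mono (hmono j))).2
            ⟨_, ⟨y, hy', rfl⟩, ?_⟩
          rintro ⟨z, hz, hzy⟩
          obtain ⟨σ, hσ, rfl⟩ : y ∈ 𝒢.orbit z := hzy ▸ mem_orbit_self 𝒢 y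
          exact hy (by
            change M ≤ 𝒢.mu _ (σ z)
            rw [mu_map 𝒢 _ hσ]; exact hz)
        have := Set.ncard_lt_ncard this (Set.toFinite _)
        omega
  have hfin : Z 𝒢.orbitNumber = Set.univ := by
    rcases key _ le_rfl with h | h
    · exact h
    · have : (𝒢.orbit '' Z 𝒢.orbitNumber).ncard ≤ 𝒢.orbitNumber :=
        Set.ncard_le_ncard (Set.image_subset_range _ _) (Set.toFinite _)
      omega
  have : v ∈ Z 𝒢.orbitNumber := hfin ▸ Set.mem_univ v
  exact this

/-- Unless all of `S` is reached, `2r + 1` further time steps reach a new vertex of `S`: `r` steps to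
equalise `mu` from below, one to exceed that level somewhere, `r` to carry the excess back to `S`. -/
lemma reach_grow (𝒢 : TemporalGraph V) (hc : 𝒢.IsConnectedTG) {S : Set V} (hS : 𝒢.IsOrbit S)
    {w : V} {t i : ℕ} (ht : 1 ≤ t) (hi : t + (i + (2 * 𝒢.orbitNumber + 1)) ≤ 𝒢.lifetime)
    (hlt : (𝒢.reach w t i ∩ S).ncard < S.ncard) :
    (𝒢.reach w t i ∩ S).ncard < (𝒢.reach w t (i + (2 * 𝒢.orbitNumber + 1)) ∩ S).ncard := by
  set r := 𝒢.orbitNumber with hr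
  obtain ⟨u, huS⟩ : S.Nonempty := by
    by_contra h
    rw [Set.not_nonempty_iff_eq_empty] at h
    simp [h] at hlt
  have hcard : 0 < 𝒢.auts.card := Finset.card_pos.2 ⟨1, mem_auts.2 (isAut_one 𝒢)⟩
  have hn : 0 < S.ncard := by omega
  set M := 𝒢.mu (𝒢.reach w t i) u with hM
  have hMlt : M < 𝒢.auts.card := by
    have := mu_mul 𝒢 hS huS (𝒢.reach w t i)
    have h2 := Nat.mul_lt_mul_of_pos_right hlt hcard
    rw [← this, mul_comm S.ncard] at h2
    exact lt_of_mul_lt_mul_right h2 (Nat.zero_le _)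
  have h1 : ∀ v, M ≤ 𝒢.mu (𝒢.reach w t (i + r)) v := spread 𝒢 hc ht (by omega) (le_refl M)
  obtain ⟨v, hv⟩ : ∃ v, M + 1 ≤ 𝒢.mu (𝒢.reach w t (i + r + 1)) v := by
    by_cases hex : ∃ v, M + 1 ≤ 𝒢.mu (𝒢.reach w t (i + r)) v
    · obtain ⟨v, hv⟩ := hex
      exact ⟨v, hv.trans (mu_mono 𝒢 (reach_succ_subset 𝒢 w t _) v)⟩
    push Not at hex
    obtain ⟨z, hz⟩ : ∃ z, z ∉ 𝒢.reach w t (i + r) := by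
      by_contra hall
      push Not at hall
      have : 𝒢.mu (𝒢.reach w t (i + r)) u = 𝒢.auts.card := by
        rw [mu, Finset.filter_true_of_mem fun σ _ => hall (σ u)]
      have := hex u
      omega
    obtain ⟨x, hx, y, hy, hxy⟩ := exists_cut_edge (hc (t + (i + r)) (by omega) (by omega))
      (mem_reach_self 𝒢 w t (i + r)) hz
    refine ⟨y, Nat.succ_le_of_lt (lt_of_le_of_lt (h1 y) (Finset.card_lt_card ?_))⟩
    refine (Finset.ssubset_iff_of_subset ?_).2 ⟨1, ?_, ?_⟩
    · intro σ hσ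
      simp only [Finset.mem_filter] at hσ ⊢
      exact ⟨hσ.1, Or.inl hσ.2⟩
    · simp only [Finset.mem_filter, mem_auts]
      exact ⟨isAut_one 𝒢, Or.inr ⟨x, hx, hxy⟩⟩
    · simp only [Finset.mem_filter, not_and]
      exact fun _ => hy
  have h2 : M + 1 ≤ 𝒢.mu (𝒢.reach w t (i + r + 1 + r)) u := spread 𝒢 hc ht (by omega) hv u
  have e : i + (2 * r + 1) = i + r + 1 + r := by ring
  rw [e]
  have a1 := mu_mul 𝒢 hS huS (𝒢.reach w t i)
  have a2 := mu_mul 𝒢 hS huS (𝒢.reach w t (i + r + 1 + r))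
  have a3 : 𝒢.mu (𝒢.reach w t i) u * S.ncard
      < 𝒢.mu (𝒢.reach w t (i + r + 1 + r)) u * S.ncard :=
    Nat.mul_lt_mul_of_pos_right (by omega) hn
  rw [a1, a2] at a3
  exact lt_of_mul_lt_mul_right a3 (Nat.zero_le _)

lemma reach_card (𝒢 : TemporalGraph V) (hc : 𝒢.IsConnectedTG) {S : Set V} (hS : 𝒢.IsOrbit S)
    {w : V} {t : ℕ} (ht : 1 ≤ t) (k : ℕ) (hk : k ≤ S.ncard)
    (hl : t + (2 * 𝒢.orbitNumber + 1) * k ≤ 𝒢.lifetime) :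
    k ≤ (𝒢.reach w t ((2 * 𝒢.orbitNumber + 1) * k) ∩ S).ncard := by
  induction k with
  | zero => simp
  | succ k ih =>
    rw [Nat.mul_succ] at hl ⊢
    have h := ih (by omega) (by omega)
    by_cases hlt : (𝒢.reach w t ((2 * 𝒢.orbitNumber + 1) * k) ∩ S).ncard < S.ncard
    · have := reach_grow 𝒢 hc hS ht hl hlt
      omega
    · have hsub : 𝒢.reach w t ((2 * 𝒢.orbitNumber + 1) * k) ∩ S ⊆
          𝒢.reach w t ((2 * 𝒢.orbitNumber + 1) * k + (2 * 𝒢.orbitNumber + 1)) ∩ S :=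
        Set.inter_subset_inter_left _ (reach_mono 𝒢 w t (by omega))
      have := Set.ncard_le_ncard hsub (Set.toFinite _)
      omega

/-! ### Doubling -/

lemma IsWalk.map {𝒢 : TemporalGraph V} {W : ℕ → V} {t t' : ℕ} (h : 𝒢.IsWalk W t t')
    {σ : Equiv.Perm V} (hσ : 𝒢.IsAut σ) : 𝒢.IsWalk (fun s => σ (W s)) t t' := by
  obtain ⟨h1, h2, h3, h4⟩ := h
  refine ⟨h1, h2, h3, fun s hs hs' => ?_⟩
  rcases h4 s hs hs' with h | h
  · exact Or.inl (congrArg σ h)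
  · exact Or.inr ((hσ s (by omega) (by omega) _ _).1 h)

lemma IsWalk.concat {𝒢 : TemporalGraph V} {W₁ W₂ : ℕ → V} {t t₁ t₂ : ℕ}
    (h₁ : 𝒢.IsWalk W₁ t t₁) (h₂ : 𝒢.IsWalk W₂ t₁ t₂) (h : W₁ t₁ = W₂ t₁) :
    ∃ W, 𝒢.IsWalk W t t₂ ∧ W t = W₁ t ∧ W t₂ = W₂ t₂ ∧
      visited W₁ t t₁ ⊆ visited W t t₂ ∧ visited W₂ t₁ t₂ ⊆ visited W t t₂ := by
  obtain ⟨a1, a2, a3, a4⟩ := h₁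
  obtain ⟨b1, b2, b3, b4⟩ := h₂
  set W : ℕ → V := fun s => if s ≤ t₁ then W₁ s else W₂ s with hW
  have e1 : ∀ s, s ≤ t₁ → W s = W₁ s := fun s hs => by simp [hW, hs]
  have e2 : ∀ s, t₁ ≤ s → W s = W₂ s := fun s hs => by
    rcases hs.eq_or_lt with rfl | hs
    · simp [hW, h]
    · simp [hW, not_le.2 hs]
  refine ⟨W, ⟨a1, a2.trans b2, b3, ?_⟩, e1 t a2, e2 t₂ b2, ?_, ?_⟩
  · intro s hs hs'
    rcases Nat.lt_or_ge s t₁ with h | h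
    · rw [e1 s h.le, e1 (s + 1) h]; exact a4 s hs h
    · rw [e2 s h, e2 (s + 1) (by omega)]; exact b4 s h hs'
  · rintro _ ⟨s, ⟨hs, hs'⟩, rfl⟩
    exact ⟨s, ⟨hs, hs'.trans b2⟩, e1 s hs'⟩
  · rintro _ ⟨s, ⟨hs, hs'⟩, rfl⟩
    exact ⟨s, ⟨a2.trans hs, hs'⟩, e2 s hs⟩

/-- Averaging over the automorphisms that map `u₀` into `R`: one of them moves `Y` so that its
overlap with `X` is at most `|X| |Y| / |R ∩ S|`. -/
lemma exists_small_overlap (𝒢 : TemporalGraph V) {S : Set V} (hS : 𝒢.IsOrbit S) {u₀ : V}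
    (hu₀ : u₀ ∈ S) (R : Set V) (hR : 0 < (R ∩ S).ncard) (X Y : Finset V)
    (hX : ∀ x ∈ X, x ∈ S) (hY : ∀ y ∈ Y, y ∈ S) :
    ∃ σ, 𝒢.IsAut σ ∧ σ u₀ ∈ R ∧
      (X ∩ Y.image σ).card * (R ∩ S).ncard ≤ X.card * Y.card := by
  by_contra hcon
  push Not at hcon
  set A := 𝒢.auts.filter fun σ => σ u₀ ∈ R with hA
  have hcard : 0 < 𝒢.auts.card := Finset.card_pos.2 ⟨1, mem_auts.2 (isAut_one 𝒢)⟩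
  have hn : 0 < S.ncard := (Set.ncard_pos (Set.toFinite _)).2 ⟨u₀, hu₀⟩
  have hAmul : A.card * S.ncard = (R ∩ S).ncard * 𝒢.auts.card := mu_mul 𝒢 hS hu₀ R
  have hApos : A.Nonempty := by
    rw [← Finset.card_pos]
    by_contra h0
    have h0' : A.card = 0 := by omega
    rw [h0', zero_mul] at hAmul
    have := Nat.mul_pos hR hcard
    omega
  have hlow : A.card * (X.card * Y.card) < ∑ σ ∈ A, (X ∩ Y.image σ).card * (R ∩ S).ncard := by
    rw [← smul_eq_mul, ← Finset.sum_const]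
    refine Finset.sum_lt_sum_of_nonempty hApos fun σ hσ => ?_
    simp only [hA, Finset.mem_filter, mem_auts] at hσ
    exact hcon σ hσ.1 hσ.2
  have hoverlap : ∀ σ : Equiv.Perm V, (X ∩ Y.image σ).card
      = ∑ x ∈ X, ∑ y ∈ Y, if σ y = x then 1 else 0 := by
    intro σ
    rw [← Finset.filter_mem_eq_inter, Finset.card_filter]
    refine Finset.sum_congr rfl fun x _ => ?_
    have : ∀ y ∈ Y, (if σ y = x then 1 else 0) = if y = σ⁻¹ x then 1 else 0 := fun y _ => by
      congr 1
      rw [Equiv.Perm.eq_inv_iff_eq]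
    rw [Finset.sum_congr rfl this, Finset.sum_ite_eq']
    congr 1
    simp only [Finset.mem_image, eq_iff_iff]
    constructor
    · rintro ⟨y, hy, rfl⟩; simpa using hy
    · intro h; exact ⟨_, h, by simp⟩
  have hup : (∑ σ ∈ A, (X ∩ Y.image σ).card) * S.ncard ≤ X.card * Y.card * 𝒢.auts.card := by
    calc (∑ σ ∈ A, (X ∩ Y.image σ).card) * S.ncard
        ≤ (∑ σ ∈ 𝒢.auts, (X ∩ Y.image σ).card) * S.ncard :=
          Nat.mul_le_mul_right _ (Finset.sum_le_sum_of_subset (Finset.filter_subset _ _))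
      _ = ∑ x ∈ X, ∑ y ∈ Y, 𝒢.mu {x} y * S.ncard := by
          rw [Finset.sum_congr rfl fun σ _ => hoverlap σ, Finset.sum_comm, Finset.sum_mul]
          refine Finset.sum_congr rfl fun x _ => ?_
          rw [Finset.sum_comm, Finset.sum_mul]
          refine Finset.sum_congr rfl fun y _ => ?_
          rw [mu, Finset.card_filter]
          simp
      _ = ∑ x ∈ X, ∑ y ∈ Y, 𝒢.auts.card :=
          Finset.sum_congr rfl fun x hx => Finset.sum_congr rfl fun y hy =>
            mu_singleton_mul 𝒢 hS (hY y hy) (hX x hx)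
      _ = X.card * Y.card * 𝒢.auts.card := by simp [mul_assoc]
  rw [← Finset.sum_mul] at hlow
  have f1 := Nat.mul_lt_mul_of_pos_right hlow hn
  have f2 := Nat.mul_le_mul_right (R ∩ S).ncard hup
  have f3 : A.card * (X.card * Y.card) * S.ncard
      = X.card * Y.card * 𝒢.auts.card * (R ∩ S).ncard := by
    calc A.card * (X.card * Y.card) * S.ncard = A.card * S.ncard * (X.card * Y.card) := by ring
      _ = _ := by rw [hAmul]; ring
  have f4 : (∑ σ ∈ A, (X ∩ Y.image σ).card) * (R ∩ S).ncard * S.ncard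
      = (∑ σ ∈ A, (X ∩ Y.image σ).card) * S.ncard * (R ∩ S).ncard := by ring
  rw [f3, f4] at f1
  omega

/-- From every vertex of `S`, at every start time leaving `T` time steps, some walk of exactly `T`
time steps visits at least `K` vertices of `S`. -/
def CanVisit (𝒢 : TemporalGraph V) (S : Set V) (K T : ℕ) : Prop :=
  ∀ u ∈ S, ∀ t, 1 ≤ t → t + T ≤ 𝒢.lifetime →
    ∃ W : ℕ → V, 𝒢.IsWalk W t (t + T) ∧ W t = u ∧ K ≤ (visited W t (t + T) ∩ S).ncard

lemma canVisit_one (𝒢 : TemporalGraph V) (S : Set V) : 𝒢.CanVisit S 1 0 := by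
  intro u hu t ht hl
  refine ⟨fun _ => u, ⟨ht, le_rfl, hl, fun _ _ _ => Or.inl rfl⟩, rfl, ?_⟩
  exact (Set.ncard_pos (Set.toFinite _)).2 ⟨u, ⟨t, ⟨le_rfl, le_rfl⟩, rfl⟩, hu⟩

lemma exists_finset_card_eq {X : Set V} {K : ℕ} (h : K ≤ X.ncard) :
    ∃ Y : Finset V, (Y : Set V) ⊆ X ∧ Y.card = K := by
  rw [Set.ncard_eq_toFinset_card'] at h
  obtain ⟨Y, hY, hc⟩ := Finset.exists_subset_card_eq h
  exact ⟨Y, fun y hy => by simpa using hY hy, hc⟩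

/-- Visiting `K` vertices twice, the second time along an image with small overlap, visits
`2K - K / c` vertices; the time between the two walks is spent reaching `cK` vertices of `S`. -/
lemma doubling (𝒢 : TemporalGraph V) (hc : 𝒢.IsConnectedTG) {S : Set V} (hS : 𝒢.IsOrbit S)
    {K T : ℕ} (h : 𝒢.CanVisit S K T) (hK : 1 ≤ K) {c : ℝ} (hc1 : 1 < c)
    (hcK : c * K ≤ S.ncard) :
    𝒢.CanVisit S ⌈(1 + (c - 1) / c) * K⌉₊
      (2 * T + (2 * 𝒢.orbitNumber + 1) * ⌈c * K⌉₊) := by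
  intro u hu t ht hl
  set k := ⌈c * K⌉₊ with hk
  set D := (2 * 𝒢.orbitNumber + 1) * k with hD
  have hKpos : (0 : ℝ) < K := by exact_mod_cast hK
  have hkn : k ≤ S.ncard := Nat.ceil_le.2 hcK
  have hkc : c * K ≤ k := Nat.le_ceil _
  obtain ⟨W₁, hW₁, hW₁t, hW₁K⟩ := h u hu t ht (by omega)
  have hR := reach_card 𝒢 hc hS (w := W₁ (t + T)) (t := t + T) (by omega) k hkn (by omega)
  rw [← hD] at hR
  set R := 𝒢.reach (W₁ (t + T)) (t + T) D with hRdef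
  obtain ⟨W₃, hW₃, hW₃t, hW₃K⟩ := h u hu (t + T + D) (by omega) (by omega)
  obtain ⟨X, hXs, hXc⟩ := exists_finset_card_eq hW₁K
  obtain ⟨Y, hYs, hYc⟩ := exists_finset_card_eq hW₃K
  have hcKpos : 0 < c * K := by positivity
  have hkpos : 0 < k := Nat.ceil_pos.2 hcKpos
  obtain ⟨σ, hσ, hσR, hover⟩ := exists_small_overlap 𝒢 hS hu R (by omega) X Y
    (fun x hx => (hXs hx).2) (fun y hy => (hYs hy).2)
  obtain ⟨W₂, hW₂, hW₂t, hW₂e⟩ := exists_walk_of_mem_reach 𝒢 (by omega) D (by omega) _ hσR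
  obtain ⟨W₄, hW₄, hW₄t, hW₄e, hv1, -⟩ := hW₁.concat hW₂ hW₂t.symm
  obtain ⟨W, hW, hWt, -, hv2, hv3⟩ := hW₄.concat (hW₃.map hσ) (by rw [hW₄e, hW₂e, hW₃t])
  have e : t + T + D + T = t + (2 * T + D) := by ring
  rw [e] at hW hv2 hv3
  refine ⟨W, hW, by rw [hWt, hW₄t, hW₁t], ?_⟩
  have hsub : ((X ∪ Y.image σ : Finset V) : Set V) ⊆ visited W t (t + (2 * T + D)) ∩ S := by
    intro z hz
    rcases Finset.mem_union.1 (Finset.mem_coe.1 hz) with hz | hz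
    · exact ⟨hv2 (hv1 (hXs hz).1), (hXs hz).2⟩
    · obtain ⟨y, hy, rfl⟩ := Finset.mem_image.1 hz
      obtain ⟨⟨s, hs, rfl⟩, hyS⟩ := hYs hy
      rw [e] at hs
      exact ⟨hv3 ⟨s, hs, rfl⟩, hS.map_mem hσ hyS⟩
  have hcard := Set.ncard_le_ncard hsub (Set.toFinite _)
  rw [Set.ncard_coe_finset] at hcard
  refine le_trans (Nat.ceil_le.2 ?_) hcard
  have hui := Finset.card_union_add_card_inter X (Y.image σ)
  rw [Finset.card_image_of_injective _ σ.injective, hXc, hYc] at hui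
  rw [hXc, hYc] at hover
  set I := (X ∩ Y.image σ).card with hI
  have hui' : ((X ∪ Y.image σ).card : ℝ) + I = K + K := by exact_mod_cast hui
  have hover' : (I : ℝ) * k ≤ K * K := by
    have : I * k ≤ K * K := (Nat.mul_le_mul_left _ hR).trans hover
    exact_mod_cast this
  have hIc : (I : ℝ) ≤ K / c := by
    rw [le_div_iff₀ (by linarith)]
    have h1 : (I : ℝ) * (c * K) ≤ K * K :=
      (mul_le_mul_of_nonneg_left hkc (Nat.cast_nonneg I)).trans hover'
    have h2 : ((I : ℝ) * c) * K ≤ K * K := by linarith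
    exact le_of_mul_le_mul_right h2 hKpos
  have : (1 + (c - 1) / c) * (K : ℝ) = K + K - K / c := by
    have : c ≠ 0 := by linarith
    field_simp
    ring
  rw [this]
  linarith

end TemporalGraph

/-! ### The recurrence -/

/-- The bound `K^φ (1 + log₂ K)` absorbs one doubling step with growth factor `f = 2^(1/φ)`. The
additive term `K` is paid for by `2 K^φ (log₂ K' - log₂ K)`. -/
lemma potential_step {f φ : ℝ} (hf1 : 1 < f) (hφ : φ = 1 / Real.logb 2 f)
    (hφ1 : 1 ≤ φ) {K K' : ℕ} (hK : 1 ≤ K) (hlt : K < K') (hK' : f * K ≤ K') :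
    2 * ((K : ℝ) ^ φ * (1 + Real.logb 2 K)) + K
      ≤ (K' : ℝ) ^ φ * (1 + Real.logb 2 K') := by
  have hlf : 0 < Real.logb 2 f := Real.logb_pos (by norm_num) hf1
  have hK0 : (1 : ℝ) ≤ K := by exact_mod_cast hK
  have hKpos : (0 : ℝ) < K := by linarith
  have hfpow : f ^ φ = 2 := by
    rw [Real.rpow_def_of_pos (by linarith), hφ, Real.logb]
    have : Real.log f ≠ 0 := (Real.log_pos hf1).ne'
    have h2 : Real.log 2 ≠ 0 := (Real.log_pos (by norm_num)).ne'
    rw [show Real.log f * (1 / (Real.log f / Real.log 2)) = Real.log 2 by field_simp]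
    exact Real.exp_log (by norm_num)
  have hpow : 2 * (K : ℝ) ^ φ ≤ (K' : ℝ) ^ φ := by
    rw [← hfpow, ← Real.mul_rpow (by linarith) hKpos.le]
    exact Real.rpow_le_rpow (by positivity) hK' (by linarith)
  have hlogK : 0 ≤ Real.logb 2 K := Real.logb_nonneg (by norm_num) hK0
  have hKφ : (K : ℝ) ≤ (K : ℝ) ^ φ := by
    simpa using Real.rpow_le_rpow_of_exponent_le hK0 hφ1
  have hgain : (K : ℝ) ≤ 2 * (K : ℝ) ^ φ * (Real.logb 2 K' - Real.logb 2 K) := by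
    rcases hK.eq_or_lt with h1 | h2
    · subst h1
      have : (1 : ℝ) ≤ Real.logb 2 K' := by
        rw [Real.le_logb_iff_rpow_le (by norm_num) (by exact_mod_cast (by omega : 0 < K'))]
        simpa using (by exact_mod_cast hlt : (2 : ℝ) ≤ K')
      simp
      linarith
    · have hd : 1 / φ ≤ Real.logb 2 K' - Real.logb 2 K := by
        have : Real.logb 2 (f * K) ≤ Real.logb 2 K' :=
          Real.logb_le_logb_of_le (by norm_num) (by positivity) hK'
        rw [Real.logb_mul (by linarith) hKpos.ne'] at this
        rw [hφ, one_div_one_div]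
        linarith
      have hφK : φ * K ≤ 2 * (K : ℝ) ^ φ := by
        have hb : φ ≤ 2 * (K : ℝ) ^ (φ - 1) := by
          have h2K : (2 : ℝ) ≤ K := by exact_mod_cast h2
          have b1 : (2 : ℝ) ^ (φ - 1) ≤ (K : ℝ) ^ (φ - 1) :=
            Real.rpow_le_rpow (by norm_num) h2K (by linarith)
          have b2 : 2 * (2 : ℝ) ^ (φ - 1) = 2 ^ φ := by
            rw [Real.rpow_sub_one (by norm_num)]; ring
          have b3 : φ ≤ 2 ^ φ := by
            have := one_add_mul_self_le_rpow_one_add (s := 1) (by norm_num) hφ1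
            norm_num at this
            linarith
          linarith
        have : (K : ℝ) ^ φ = (K : ℝ) ^ (φ - 1) * K := by
          rw [Real.rpow_sub_one hKpos.ne']; field_simp
        rw [this]
        nlinarith
      have hφpos : 0 < φ := by linarith
      calc (K : ℝ) = φ * K * (1 / φ) := by field_simp
        _ ≤ 2 * (K : ℝ) ^ φ * (1 / φ) := by gcongr
        _ ≤ _ := by gcongr
  have hlogK' : Real.logb 2 K ≤ Real.logb 2 K' :=
    Real.logb_le_logb_of_le (by norm_num) hKpos (by exact_mod_cast hlt.le)
  calc 2 * ((K : ℝ) ^ φ * (1 + Real.logb 2 K)) + K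
      ≤ 2 * (K : ℝ) ^ φ * (1 + Real.logb 2 K') := by linarith
    _ ≤ _ := by gcongr; linarith

/-- Lemma 4.5: there is a universal constant `C > 0` such that in any
connected temporal graph with orbit number `r`, for any orbit `S` with `|S| ≥ 2`, any
`1 < c < |S|`, any `u ∈ S`, and any suitable start time `t`, there is a temporal walk
starting at `u` at time `t` that visits at least `|S|/c` vertices of `S` and spans at
most `C·r·c·(|S|/c)^{φ(c)}·log₂ |S|` time steps, where `φ(c) = 1/log₂(1 + (c-1)/c)`. -/
theorem fraction_orbit_exploration :
    ∃ C : ℝ, 0 < C ∧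
      ∀ (V : Type) [Fintype V], ∀ 𝒢 : TemporalGraph V, 𝒢.IsConnectedTG →
      ∀ r : ℕ, r = 𝒢.orbitNumber →
      ∀ S : Set V, 𝒢.IsOrbit S → 2 ≤ S.ncard →
      ∀ c : ℝ, 1 < c → c < (S.ncard : ℝ) →
      ∀ u ∈ S, ∀ t : ℕ, 1 ≤ t →
      (t : ℝ) + C * r * c * ((S.ncard : ℝ) / c) ^ (1 / Real.logb 2 (1 + (c - 1) / c))
            * Real.logb 2 (S.ncard : ℝ)
          ≤ (𝒢.lifetime : ℝ) →
      ∃ t' : ℕ, t ≤ t' ∧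
        (t' : ℝ) - (t : ℝ)
          ≤ C * r * c * ((S.ncard : ℝ) / c) ^ (1 / Real.logb 2 (1 + (c - 1) / c))
              * Real.logb 2 (S.ncard : ℝ) ∧
        ∃ W : ℕ → V, 𝒢.IsWalk W t t' ∧ W t = u ∧
          (S.ncard : ℝ) / c ≤ ((TemporalGraph.visited W t t' ∩ S).ncard : ℝ) := by
  classical
  refine ⟨30, by norm_num, ?_⟩
  intro V _ 𝒢 hconn r hr S hS hn2 c hc1 hcn u hu t ht hl
  set n := S.ncard with hn
  set f : ℝ := 1 + (c - 1) / c with hf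
  set φ : ℝ := 1 / Real.logb 2 f with hφ
  have hc0 : 0 < c := by linarith
  have hfrac : 0 < (c - 1) / c := div_pos (by linarith) hc0
  have hf1 : 1 < f := by linarith
  have hf2 : f ≤ 2 := by
    have : (c - 1) / c ≤ 1 := (div_le_one hc0).2 (by linarith)
    linarith
  have hlf : 0 < Real.logb 2 f := Real.logb_pos (by norm_num) hf1
  have hφ1 : 1 ≤ φ := by
    rw [hφ, le_div_iff₀ hlf, one_mul]
    calc Real.logb 2 f ≤ Real.logb 2 2 :=
          Real.logb_le_logb_of_le (by norm_num) (by linarith) hf2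
      _ = 1 := Real.logb_self_eq_one (by norm_num)
  have hr1 : 1 ≤ r := by
    rw [hr]
    exact (Set.ncard_pos (Set.toFinite _)).2 ⟨_, u, rfl⟩
  have hr1' : (1 : ℝ) ≤ r := by exact_mod_cast hr1
  have hnc : 1 < (n : ℝ) / c := (one_lt_div hc0).2 hcn
  -- `P K`: the target `n / c` is not yet met, and `K` vertices can be visited within the potential.
  let P : ℕ → Prop := fun K => 1 ≤ K ∧ (K : ℝ) < n / c ∧
    ∃ T : ℕ, 𝒢.CanVisit S K T ∧ (T : ℝ) ≤ 6 * r * c * ((K : ℝ) ^ φ * (1 + Real.logb 2 K))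
  have hP1 : P 1 := ⟨le_rfl, by simpa using hnc, 0, 𝒢.canVisit_one S, by
    simp only [Nat.cast_one, Real.one_rpow, Real.logb_one, Nat.cast_zero]
    positivity⟩
  have hPn : ∀ K, P K → K ≤ n := fun K hK => by
    have h1 : (n : ℝ) / c ≤ n := div_le_self (Nat.cast_nonneg n) hc1.le
    exact_mod_cast (hK.2.1.le.trans h1)
  obtain ⟨K, hPK, hmax⟩ : ∃ K, P K ∧ ∀ K', P K' → K' ≤ K :=
    ⟨Nat.findGreatest P n, Nat.findGreatest_spec (hPn 1 hP1) hP1,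
      fun K' hK' => Nat.le_findGreatest (hPn K' hK') hK'⟩
  obtain ⟨hK1, hKlt, T, hT, hTb⟩ := hPK
  have hK0 : (1 : ℝ) ≤ K := by exact_mod_cast hK1
  have hcK : c * K ≤ n := by
    have := (lt_div_iff₀ hc0).1 hKlt
    linarith
  have hvisit := 𝒢.doubling hconn hS hT hK1 hc1 hcK
  rw [← hr] at hvisit
  set K' := ⌈f * K⌉₊ with hK'
  set T' := 2 * T + (2 * r + 1) * ⌈c * K⌉₊ with hT'
  have hfK : f * K ≤ K' := Nat.le_ceil _
  have hKK' : K < K' := by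
    have : (K : ℝ) < K' := lt_of_lt_of_le (by nlinarith) hfK
    exact_mod_cast this
  have hDb : ((2 * r + 1 : ℕ) : ℝ) * (⌈c * K⌉₊ : ℝ) ≤ 6 * r * c * K := by
    have h1 : (1 : ℝ) ≤ c * K := by nlinarith
    have h2 : (⌈c * K⌉₊ : ℝ) ≤ 2 * (c * K) := by
      have := Nat.ceil_lt_add_one (a := c * K) (by positivity)
      linarith
    have h3 : ((2 * r + 1 : ℕ) : ℝ) ≤ 3 * r := by push_cast; linarith
    calc ((2 * r + 1 : ℕ) : ℝ) * (⌈c * K⌉₊ : ℝ) ≤ (3 * r) * (2 * (c * K)) := by gcongr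
      _ = 6 * r * c * K := by ring
  have hT'b : (T' : ℝ) ≤ 6 * r * c * (2 * ((K : ℝ) ^ φ * (1 + Real.logb 2 K)) + K) := by
    have : (T' : ℝ) = 2 * T + ((2 * r + 1 : ℕ) : ℝ) * (⌈c * K⌉₊ : ℝ) := by
      rw [hT']; push_cast; ring
    rw [this]
    linarith
  have hbig : (n : ℝ) / c ≤ K' := by
    by_contra hlt
    push Not at hlt
    have : P K' := ⟨by omega, hlt, T', hvisit, hT'b.trans
      (mul_le_mul_of_nonneg_left (potential_step hf1 hφ hφ1 hK1 hKK' hfK) (by positivity))⟩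
    have := hmax K' this
    omega
  have hfinal : (T' : ℝ) ≤ 30 * r * c * ((n : ℝ) / c) ^ φ * Real.logb 2 n := by
    have hL1 : 1 ≤ Real.logb 2 (n : ℝ) := by
      have : (2 : ℝ) ≤ n := by exact_mod_cast hn2
      rw [Real.le_logb_iff_rpow_le (by norm_num) (by linarith)]
      simpa using this
    have hLK : Real.logb 2 (K : ℝ) ≤ Real.logb 2 (n : ℝ) :=
      Real.logb_le_logb_of_le (by norm_num) (by linarith) (by nlinarith)
    have hLK0 : 0 ≤ Real.logb 2 (K : ℝ) := Real.logb_nonneg (by norm_num) hK0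
    have hpow : (K : ℝ) ^ φ ≤ ((n : ℝ) / c) ^ φ :=
      Real.rpow_le_rpow (by linarith) hKlt.le (by linarith)
    have hKφ : (K : ℝ) ≤ (K : ℝ) ^ φ := by
      simpa using Real.rpow_le_rpow_of_exponent_le hK0 hφ1
    have hb : 2 * ((K : ℝ) ^ φ * (1 + Real.logb 2 K)) + K
        ≤ ((n : ℝ) / c) ^ φ * (5 * Real.logb 2 n) := by
      calc 2 * ((K : ℝ) ^ φ * (1 + Real.logb 2 K)) + K
          ≤ (K : ℝ) ^ φ * (2 * (1 + Real.logb 2 K) + 1) := by linarith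
        _ ≤ ((n : ℝ) / c) ^ φ * (5 * Real.logb 2 n) := by
          gcongr
          linarith
    calc (T' : ℝ) ≤ 6 * r * c * (2 * ((K : ℝ) ^ φ * (1 + Real.logb 2 K)) + K) := hT'b
      _ ≤ 6 * r * c * (((n : ℝ) / c) ^ φ * (5 * Real.logb 2 n)) := by gcongr
      _ = _ := by ring
  have hlife : t + T' ≤ 𝒢.lifetime := by
    have : (t : ℝ) + T' ≤ 𝒢.lifetime := by linarith
    exact_mod_cast this
  obtain ⟨W, hW, hWt, hWK⟩ := hvisit u hu t ht hlife
  refine ⟨t + T', by omega, by push_cast; linarith, W, hW, hWt, hbig.trans ?_⟩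
  exact_mod_cast hWK
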